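/- Assume (Φ1) with exponent k ∈ (−1/2, 3/2), and let P := P_Φ := h ∘ (g|_{[0,∞)})⁻¹ be the induced macroscopic equation of state. Set γ := 1/(k + 3/2), so γ ∈ (1/3, 1). Then there exist constants c₁, c₂ > 0 such that for all sufficiently small ρ > 0: c₁ ρ^{γ} ≤ P′(ρ) ≤ c₂ ρ^{γ} and c₁ ρ^{γ+1} ≤ P(ρ) ≤ c₂ ρ^{γ+1}. In particular P′(ρ) ≤ c ρ^{1/n} for sufficiently small ρ > 0, with n := k + 3/2 ∈ (1, 3). -/

import Mathlib

open MeasureTheory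

noncomputable section

/-- The macroscopic energy density `g(y)` induced by the microscopic ansatz `Φ` (extended by
`0` for `y ≤ 0`). -/
def gfun (Φ : ℝ → ℝ) (y : ℝ) : ℝ :=
  if y ≤ 0 then 0 else
    4 * Real.pi * Real.exp (4 * y) *
      ∫ η in (0:ℝ)..(1 - Real.exp (-y)),
        Φ η * (1 - η) ^ 2 * Real.sqrt ((1 - η) ^ 2 - Real.exp (-2 * y))

/-- The macroscopic pressure `h(y)` induced by the microscopic ansatz `Φ` (extended by `0` for
`y ≤ 0`). -/
def hfun (Φ : ℝ → ℝ) (y : ℝ) : ℝ :=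
  if y ≤ 0 then 0 else
    4 * Real.pi / 3 * Real.exp (4 * y) *
      ∫ η in (0:ℝ)..(1 - Real.exp (-y)),
        Φ η * Real.sqrt ((1 - η) ^ 2 - Real.exp (-2 * y)) ^ 3

section Auxiliary

open Set Filter Topology Asymptotics

theorem hasDerivAt_of_abs_sub_le_rpow {f : ℝ → ℝ} {f' x C p : ℝ} (hp : 1 < p)
    (h : ∀ y, |f y - f x - (y - x) * f'| ≤ C * |y - x| ^ p) : HasDerivAt f f' x := by
  rw [hasDerivAt_iff_isLittleO]
  have h1 : (fun y => f y - f x - (y - x) • f') =O[𝓝 x] fun y => |y - x| ^ p := by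
    refine IsBigO.of_bound C (Eventually.of_forall fun y => ?_)
    rw [Real.norm_eq_abs, Real.norm_eq_abs, abs_of_nonneg (by positivity : 0 ≤ |y - x| ^ p)]
    simpa using h y
  refine h1.trans_isLittleO ?_
  have h2 : (fun y => |y - x| ^ p) = fun y => |y - x| ^ (p - 1) * |y - x| := by
    ext y
    rcases eq_or_ne (|y - x|) 0 with h0 | h0
    · rw [h0, Real.zero_rpow (by linarith), mul_zero]
    · rw [Real.rpow_sub_one h0, div_mul_cancel₀ _ h0]
  rw [h2]
  have h3 : Tendsto (fun y => |y - x| ^ (p - 1)) (𝓝 x) (𝓝 0) := by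
    have : ContinuousAt (fun y => |y - x| ^ (p - 1)) x := by
      refine ContinuousAt.rpow_const (by fun_prop) (Or.inr (by linarith))
    have h4 := this.tendsto
    simpa [Real.zero_rpow (by linarith : p - 1 ≠ 0)] using h4
  have h5 := ((isLittleO_one_iff ℝ).2 h3).mul_isBigO
    (isBigO_refl (fun y => |y - x|) (𝓝 x))
  simp only [one_mul] at h5
  exact h5.trans_isBigO (isBigO_refl (fun y => y - x) _).abs_left

theorem hasDerivAt_integral_of_abs_sub_le_rpow {K : ℝ → ℝ → ℝ} {L B : ℝ → ℝ} {a b p u : ℝ}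
    (hp : 1 < p) (hab : a ≤ b)
    (hK : ∀ v, IntervalIntegrable (K v) volume a b) (hL : Measurable L)
    (hB : IntervalIntegrable B volume a b)
    (h : ∀ v, ∀ᵐ η, η ∈ Ioc a b → |K v η - K u η - (v - u) * L η| ≤ |v - u| ^ p * B η) :
    HasDerivAt (fun v => ∫ η in a..b, K v η) (∫ η in a..b, L η) u := by
  have hL' : IntervalIntegrable L volume a b := by
    refine ((hB.add (hK (u + 1)).norm).add (hK u).norm).mono_fun
      hL.aestronglyMeasurable ?_
    rw [uIoc_of_le hab]
    refine (ae_restrict_iff' measurableSet_Ioc).2 ?_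
    filter_upwards [h (u + 1)] with η hη hmem
    have h1 := hη hmem
    simp only [add_sub_cancel_left, abs_one, Real.one_rpow, one_mul] at h1
    refine le_trans ?_ (le_abs_self _)
    simp only [Real.norm_eq_abs]
    have h2 := abs_sub_abs_le_abs_sub (L η) (K (u + 1) η - K u η)
    rw [abs_sub_comm (L η)] at h2
    have h3 := abs_sub (K (u + 1) η) (K u η)
    linarith
  refine hasDerivAt_of_abs_sub_le_rpow (C := ∫ η in a..b, B η) hp fun v => ?_
  rw [← intervalIntegral.integral_sub (hK v) (hK u), ← intervalIntegral.integral_const_mul,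
    ← intervalIntegral.integral_sub ((hK v).sub (hK u)) (hL'.const_mul _), mul_comm,
    ← intervalIntegral.integral_const_mul, ← Real.norm_eq_abs]
  refine intervalIntegral.norm_integral_le_of_norm_le hab ?_ (hB.const_mul _)
  filter_upwards [h v] with η hη hmem using hη hmem

theorem abs_sqrt_sub_sqrt_add_le (x e : ℝ) (hx : x ≠ 0) :
    |√(x - e) - √x + e / (2 * √x)| ≤ |e| ^ (5 / 4 : ℝ) * |x| ^ (-(3 / 4) : ℝ) := by
  have hX : 0 < |x| := abs_pos.2 hx
  have hs : 0 < √|x| := Real.sqrt_pos.2 hX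
  have hsq : √|x| ^ 2 = |x| := Real.sq_sqrt hX.le
  have key : |√(x - e) - √x + e / (2 * √x)| ≤ |e| / √|x| ∧
      |√(x - e) - √x + e / (2 * √x)| ≤ |e| ^ 2 / (√|x| ^ 3) := by
    rcases lt_or_gt_of_ne hx with hneg | hpos
    · rw [Real.sqrt_eq_zero_of_nonpos hneg.le]
      simp only [mul_zero, div_zero, add_zero, sub_zero]
      rw [abs_of_nonneg (Real.sqrt_nonneg _)]
      rcases le_or_gt (x - e) 0 with hle | hgt
      · rw [Real.sqrt_eq_zero_of_nonpos hle]
        exact ⟨by positivity, by positivity⟩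
      · have he : |x| < |e| := by
          rw [abs_of_neg hneg, abs_of_neg (by linarith)]; linarith
        have hse : √(x - e) ≤ √|e| := Real.sqrt_le_sqrt (by
          rw [abs_of_neg (by linarith : e < 0)]; linarith)
        have hsesq : √|e| ^ 2 = |e| := Real.sq_sqrt (abs_nonneg _)
        have hlt : √|x| ≤ √|e| := Real.sqrt_le_sqrt he.le
        have ht0 : 0 ≤ √|e| := Real.sqrt_nonneg _
        generalize √|x| = s at *
        generalize √|e| = t at *
        constructor
        · rw [le_div_iff₀ hs]
          nlinarith
        · rw [le_div_iff₀ (by positivity), ← hsesq]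
          have : s ^ 3 ≤ t ^ 3 := by gcongr
          calc √(x - e) * s ^ 3 ≤ t * t ^ 3 := by gcongr
            _ = _ := by ring
    · rw [abs_of_pos hpos] at hs hsq ⊢
      set s := √x
      rcases le_or_gt 0 (x - e) with hge | hlt
      · have ht : 0 ≤ √(x - e) := Real.sqrt_nonneg _
        have htsq : √(x - e) ^ 2 = x - e := Real.sq_sqrt hge
        generalize √(x - e) = t at *
        have he : e = s ^ 2 - t ^ 2 := by linarith
        have h1 : t - s + e / (2 * s) = -((s - t) ^ 2 / (2 * s)) := by
          rw [he]; field_simp; ring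
        have h2 : (s - t) ^ 2 ≤ |e| := by
          have : |e| = |s - t| * (s + t) := by
            rw [he, show s ^ 2 - t ^ 2 = (s - t) * (s + t) by ring, abs_mul,
              abs_of_pos (by positivity : 0 < s + t)]
          rw [this, ← sq_abs, sq]
          gcongr
          rw [abs_le]; constructor <;> linarith
        rw [h1, abs_neg, abs_of_nonneg (by positivity)]
        constructor
        · rw [div_le_div_iff₀ (by positivity) hs]
          nlinarith [abs_nonneg e]
        · rw [div_le_div_iff₀ (by positivity) (by positivity), sq_abs, he]
          have : (s ^ 2 - t ^ 2) ^ 2 * (2 * s) - (s - t) ^ 2 * s ^ 3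
            = (s - t) ^ 2 * s * (2 * (s + t) ^ 2 - s ^ 2) := by ring
          have h3 : 0 ≤ (s - t) ^ 2 * s * (2 * (s + t) ^ 2 - s ^ 2) := by
            apply mul_nonneg (by positivity)
            nlinarith
          linarith
      · rw [Real.sqrt_eq_zero_of_nonpos hlt.le]
        have he : s ^ 2 < e := by linarith
        have he0 : 0 < e := by linarith
        have h1 : |0 - s + e / (2 * s)| ≤ e / s := by
          have h2 : s ≤ e / s := by rw [le_div_iff₀ hs]; nlinarith
          have h3 : e / (2 * s) = e / s / 2 := by field_simp
          rw [h3, abs_le]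
          constructor <;> linarith
        rw [abs_of_pos he0]
        refine ⟨h1, h1.trans ?_⟩
        rw [div_le_div_iff₀ hs (by positivity)]
        have : e * s * s ^ 2 ≤ e * s * e := by gcongr
        linarith
  have hs1 : √|x| = |x| ^ (1 / 2 : ℝ) := Real.sqrt_eq_rpow _
  rcases le_total |x| |e| with hxe | hxe
  · have he0 : 0 < |e| := hX.trans_le hxe
    refine key.1.trans ?_
    rw [hs1, div_eq_mul_inv, ← Real.rpow_neg hX.le]
    calc |e| * |x| ^ (-(1 / 2) : ℝ) = |e| * (|x| ^ (1 / 4 : ℝ) * |x| ^ (-(3 / 4) : ℝ)) := by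
          rw [← Real.rpow_add hX]; norm_num
      _ ≤ |e| * (|e| ^ (1 / 4 : ℝ) * |x| ^ (-(3 / 4) : ℝ)) := by gcongr
      _ = (|e| ^ (1 : ℝ) * |e| ^ (1 / 4 : ℝ)) * |x| ^ (-(3 / 4) : ℝ) := by
          rw [Real.rpow_one]; ring
      _ = _ := by rw [← Real.rpow_add he0]; norm_num
  · rcases eq_or_ne e 0 with rfl | he
    · simp
    have he0 : 0 < |e| := abs_pos.2 he
    refine key.2.trans ?_
    rw [hs1, ← Real.rpow_mul_natCast hX.le, div_eq_mul_inv, ← Real.rpow_neg hX.le,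
      ← Real.rpow_natCast]
    calc |e| ^ ((2 : ℕ) : ℝ) * |x| ^ (-(1 / 2 * ((3 : ℕ) : ℝ)))
        = (|e| ^ (5 / 4 : ℝ) * |e| ^ (3 / 4 : ℝ)) * |x| ^ (-(1 / 2 * ((3 : ℕ) : ℝ))) := by
          rw [← Real.rpow_add he0]; norm_num
      _ ≤ (|e| ^ (5 / 4 : ℝ) * |x| ^ (3 / 4 : ℝ)) * |x| ^ (-(1 / 2 * ((3 : ℕ) : ℝ))) := by
          gcongr
      _ = _ := by
          rw [mul_assoc, ← Real.rpow_add hX]; norm_num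

theorem abs_sqrt_pow_three_sub_add_le (x e : ℝ) :
    |√(x - e) ^ 3 - √x ^ 3 + 3 / 2 * e * √x| ≤ 2 * |e| ^ (3 / 2 : ℝ) := by
  have hconv : |e| ^ (3 / 2 : ℝ) = √|e| ^ 3 := by
    rw [Real.sqrt_eq_rpow, ← Real.rpow_mul_natCast (abs_nonneg e)]; norm_num
  rw [hconv]
  have hr : 0 ≤ √|e| := Real.sqrt_nonneg _
  have hrsq : √|e| ^ 2 = |e| := Real.sq_sqrt (abs_nonneg e)
  have hs : 0 ≤ √x := Real.sqrt_nonneg _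
  have ht : 0 ≤ √(x - e) := Real.sqrt_nonneg _
  rcases le_or_gt x 0 with hx | hx
  · have h1 : √(x - e) ≤ √|e| := Real.sqrt_le_sqrt (by
      have := neg_abs_le e; linarith)
    rw [Real.sqrt_eq_zero_of_nonpos hx]
    have h2 : √(x - e) ^ 3 ≤ √|e| ^ 3 := by gcongr
    have h3 : 0 ≤ √|e| ^ 3 := by positivity
    rw [abs_of_nonneg (by simp)]
    simp only [mul_zero, add_zero]
    linarith
  · have hssq : √x ^ 2 = x := Real.sq_sqrt hx.le
    rcases le_or_gt 0 (x - e) with hge | hlt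
    · have htsq : √(x - e) ^ 2 = x - e := Real.sq_sqrt hge
      generalize √(x - e) = t at *
      generalize √x = s at *
      generalize √|e| = r at *
      have he : e = s ^ 2 - t ^ 2 := by linarith
      have h1 : t ^ 3 - s ^ 3 + 3 / 2 * e * s = (s - t) ^ 2 * (t + s / 2) := by
        rw [he]; ring
      have h2 : |e| = |s - t| * (s + t) := by
        rw [he, show s ^ 2 - t ^ 2 = (s - t) * (s + t) by ring, abs_mul,
          abs_of_nonneg (by positivity : 0 ≤ s + t)]
      have h4 : |s - t| ≤ s + t := by rw [abs_le]; constructor <;> linarith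
      have h3 : |s - t| ≤ r := by
        apply abs_le_of_sq_le_sq' _ hr |> abs_le.2
        rw [hrsq, h2, ← sq_abs, sq]
        gcongr
      rw [h1, abs_of_nonneg (by positivity), ← sq_abs]
      calc |s - t| ^ 2 * (t + s / 2) ≤ |s - t| * (|s - t| * (s + t)) := by
            rw [sq, mul_assoc]
            have : t + s / 2 ≤ s + t := by linarith
            gcongr
        _ ≤ r * r ^ 2 := by
            rw [← h2, hrsq]; gcongr
        _ ≤ 2 * r ^ 3 := by nlinarith [pow_nonneg hr 3]
    · rw [Real.sqrt_eq_zero_of_nonpos hlt.le]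
      have he0 : 0 < e := by linarith
      have h1 : √x ≤ √|e| := Real.sqrt_le_sqrt (by rw [abs_of_pos he0]; linarith)
      rw [abs_of_pos he0] at hrsq h1 ⊢
      generalize √x = s at *
      generalize √e = r at *
      have h3 : s ^ 3 ≤ r ^ 3 := by gcongr
      have h4 : e * s ≤ r ^ 3 := by
        calc e * s ≤ r ^ 2 * r := by rw [hrsq]; gcongr
          _ = r ^ 3 := by ring
      have h5 : 0 ≤ e * s := by positivity
      have h6 : 0 ≤ s ^ 3 := by positivity
      rw [abs_le]; constructor <;> linarith

theorem intervalIntegrable_of_abs_le {f : ℝ → ℝ} {a b C : ℝ} (hab : a ≤ b) (hf : Measurable f)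
    (h : ∀ x ∈ Ioc a b, |f x| ≤ C) : IntervalIntegrable f volume a b := by
  rw [intervalIntegrable_iff_integrableOn_Ioc_of_le hab]
  refine Measure.integrableOn_of_bounded (M := C) measure_Ioc_lt_top.ne hf.aestronglyMeasurable ?_
  exact (ae_restrict_iff' measurableSet_Ioc).2 (Eventually.of_forall h)

theorem intervalIntegrable_abs_sub_rpow {r : ℝ} (hr : -1 < r) (c a b : ℝ) :
    IntervalIntegrable (fun x => |c - x| ^ r) volume a b := by
  have h0 : ∀ d : ℝ, 0 ≤ d → IntervalIntegrable (fun x => |x| ^ r) volume 0 d := fun d hd =>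
    (intervalIntegral.intervalIntegrable_rpow' hr).congr (fun x hx => by
      rw [uIoc_of_le hd] at hx
      simp only [abs_of_pos hx.1])
  have h1 : ∀ d : ℝ, IntervalIntegrable (fun x => |x| ^ r) volume 0 d := fun d => by
    rcases le_total 0 d with hd | hd
    · exact h0 d hd
    · have h2 := (IntervalIntegrable.iff_comp_neg).1 (h0 (-d) (by linarith))
      simpa using h2
  have h2 : IntervalIntegrable (fun x => |x| ^ r) volume (c - a) (c - b) := (h1 _).symm.trans (h1 _)
  simpa using h2.comp_sub_left c

theorem hasDerivAt_integral_mul_sqrt {ψ : ℝ → ℝ} {M a : ℝ} (hψ : Measurable ψ)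
    (hM : ∀ η ∈ Icc (0 : ℝ) 1, |ψ η| ≤ M) (ha : 0 < a) :
    HasDerivAt (fun v => ∫ η in (0 : ℝ)..1, ψ η * √((1 - η) ^ 2 - v))
      (∫ η in (0 : ℝ)..1, -(ψ η / (2 * √((1 - η) ^ 2 - a ^ 2)))) (a ^ 2) := by
  have hM0 : 0 ≤ M := (abs_nonneg _).trans (hM 0 (by simp))
  refine hasDerivAt_integral_of_abs_sub_le_rpow (p := 5 / 4)
    (B := fun η => M * a ^ (-(3 / 4) : ℝ) * |(1 - a) - η| ^ (-(3 / 4) : ℝ))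
    (by norm_num) zero_le_one ?_ (by fun_prop)
    ((intervalIntegrable_abs_sub_rpow (by norm_num) _ _ _).const_mul _) ?_
  · intro v
    refine intervalIntegrable_of_abs_le (C := M * √(1 + |v|)) zero_le_one (by fun_prop) ?_
    intro η hη
    rw [abs_mul, abs_of_nonneg (Real.sqrt_nonneg _)]
    refine mul_le_mul (hM η ⟨hη.1.le, hη.2⟩) (Real.sqrt_le_sqrt ?_) (Real.sqrt_nonneg _) hM0
    nlinarith [neg_abs_le v, hη.1, hη.2]
  · intro v
    have hne : ∀ᵐ η : ℝ, η ≠ 1 - a := by simp [ae_iff]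
    filter_upwards [hne] with η hη hmem
    have hx : (1 - η) ^ 2 - a ^ 2 = ((1 - a) - η) * (1 - η + a) := by ring
    have hpos : a ≤ 1 - η + a := by linarith [hmem.2]
    have hx0 : (1 - η) ^ 2 - a ^ 2 ≠ 0 := by
      rw [hx]
      exact mul_ne_zero (sub_ne_zero.2 hη.symm) (by linarith)
    have h1 := abs_sqrt_sub_sqrt_add_le ((1 - η) ^ 2 - a ^ 2) (v - a ^ 2) hx0
    have h2 : |(1 - η) ^ 2 - a ^ 2| ^ (-(3 / 4) : ℝ)
        ≤ a ^ (-(3 / 4) : ℝ) * |(1 - a) - η| ^ (-(3 / 4) : ℝ) := by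
      rw [← Real.mul_rpow ha.le (abs_nonneg _)]
      refine Real.rpow_le_rpow_of_nonpos
        (mul_pos ha (abs_pos.2 (sub_ne_zero.2 hη.symm))) ?_ (by norm_num)
      rw [hx, abs_mul, mul_comm, abs_of_pos (ha.trans_le hpos)]
      gcongr
    have h3 : ψ η * √((1 - η) ^ 2 - v) - ψ η * √((1 - η) ^ 2 - a ^ 2)
        - (v - a ^ 2) * -(ψ η / (2 * √((1 - η) ^ 2 - a ^ 2)))
        = ψ η * (√((1 - η) ^ 2 - a ^ 2 - (v - a ^ 2)) - √((1 - η) ^ 2 - a ^ 2)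
          + (v - a ^ 2) / (2 * √((1 - η) ^ 2 - a ^ 2))) := by
      rw [sub_sub_sub_cancel_right]; ring
    rw [h3, abs_mul]
    calc _ ≤ M * (|v - a ^ 2| ^ (5 / 4 : ℝ) *
          (a ^ (-(3 / 4) : ℝ) * |(1 - a) - η| ^ (-(3 / 4) : ℝ))) :=
          mul_le_mul (hM η ⟨hmem.1.le, hmem.2⟩) (h1.trans (by gcongr)) (abs_nonneg _) hM0
      _ = _ := by ring

theorem hasDerivAt_integral_mul_sqrt_pow_three {ψ : ℝ → ℝ} {M : ℝ} (hψ : Measurable ψ)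
    (hM : ∀ η ∈ Icc (0 : ℝ) 1, |ψ η| ≤ M) (u : ℝ) :
    HasDerivAt (fun v => ∫ η in (0 : ℝ)..1, ψ η * √((1 - η) ^ 2 - v) ^ 3)
      (∫ η in (0 : ℝ)..1, -(3 / 2 * (ψ η * √((1 - η) ^ 2 - u)))) u := by
  have hM0 : 0 ≤ M := (abs_nonneg _).trans (hM 0 (by simp))
  refine hasDerivAt_integral_of_abs_sub_le_rpow (p := 3 / 2) (B := fun _ => M * 2)
    (by norm_num) zero_le_one ?_ (by fun_prop) (by simp) ?_
  · intro v
    refine intervalIntegrable_of_abs_le (C := M * √(1 + |v|) ^ 3) zero_le_one (by fun_prop) ?_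
    intro η hη
    rw [abs_mul, abs_of_nonneg (by positivity : 0 ≤ √((1 - η) ^ 2 - v) ^ 3)]
    have : √((1 - η) ^ 2 - v) ≤ √(1 + |v|) := Real.sqrt_le_sqrt (by
      nlinarith [neg_abs_le v, hη.1, hη.2])
    have := hM η ⟨hη.1.le, hη.2⟩
    gcongr
  · refine fun v => Eventually.of_forall fun η hmem => ?_
    have h1 := abs_sqrt_pow_three_sub_add_le ((1 - η) ^ 2 - u) (v - u)
    have h3 : ψ η * √((1 - η) ^ 2 - v) ^ 3 - ψ η * √((1 - η) ^ 2 - u) ^ 3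
        - (v - u) * -(3 / 2 * (ψ η * √((1 - η) ^ 2 - u)))
        = ψ η * (√((1 - η) ^ 2 - u - (v - u)) ^ 3 - √((1 - η) ^ 2 - u) ^ 3
          + 3 / 2 * (v - u) * √((1 - η) ^ 2 - u)) := by
      rw [sub_sub_sub_cancel_right]; ring
    rw [h3, abs_mul]
    calc _ ≤ M * (2 * |v - u| ^ (3 / 2 : ℝ)) :=
          mul_le_mul (hM η ⟨hmem.1.le, hmem.2⟩) h1 (abs_nonneg _) hM0
      _ = _ := by ring

theorem integral_bounds_of_rpow_bounds {f : ℝ → ℝ} {k p A B δ : ℝ} (hk : 0 ≤ k) (hp : -1 < p)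
    (hA : 0 ≤ A) (hB : 0 ≤ B) (hδ : 0 < δ) (hf : Measurable f)
    (hlow : ∀ η ∈ Ioo 0 δ, A * η ^ k * (δ - η) ^ p ≤ f η)
    (hup : ∀ η ∈ Ioo 0 δ, f η ≤ B * η ^ k * (δ - η) ^ p) :
    A * (1 / 2) ^ (k + p + 1) / (p + 1) * δ ^ (k + p + 1) ≤ ∫ η in (0 : ℝ)..δ, f η ∧
      ∫ η in (0 : ℝ)..δ, f η ≤ B / (p + 1) * δ ^ (k + p + 1) := by
  have hp1 : 0 < p + 1 := by linarith
  have hkernel : ∀ a b : ℝ, IntervalIntegrable (fun η => (δ - η) ^ p) volume a b := fun a b => by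
    simpa using
      (intervalIntegral.intervalIntegrable_rpow' (a := δ - a) (b := δ - b) hp).comp_sub_left δ
  have hval : ∀ c : ℝ, ∫ η in c..δ, (δ - η) ^ p = (δ - c) ^ (p + 1) / (p + 1) := fun c => by
    rw [intervalIntegral.integral_comp_sub_left (fun x => x ^ p), sub_self,
      integral_rpow (Or.inl hp), Real.zero_rpow hp1.ne', sub_zero]
  have hnn : ∀ η ∈ Ioo 0 δ, 0 ≤ f η := fun η hη => by
    refine le_trans ?_ (hlow η hη)
    have h1 := hη.1
    have h2 : 0 < δ - η := sub_pos.2 hη.2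
    positivity
  have hup' : ∀ η ∈ Ioo 0 δ, f η ≤ B * δ ^ k * (δ - η) ^ p := fun η hη => by
    refine (hup η hη).trans ?_
    have h1 := hη.1
    have h3 := hη.2.le
    have h2 : 0 < δ - η := sub_pos.2 hη.2
    gcongr
  have hfint : IntervalIntegrable f volume 0 δ := by
    refine ((hkernel 0 δ).const_mul (B * δ ^ k)).mono_fun hf.aestronglyMeasurable ?_
    rw [uIoc_of_le hδ.le, ← restrict_Ioo_eq_restrict_Ioc]
    refine (ae_restrict_iff' measurableSet_Ioo).2 (Eventually.of_forall fun η hη => ?_)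
    simp only [Real.norm_eq_abs]
    rw [abs_of_nonneg (hnn η hη)]
    exact (hup' η hη).trans (le_abs_self _)
  have hδk : δ ^ k * δ ^ (p + 1) = δ ^ (k + p + 1) := by
    rw [← Real.rpow_add hδ]; ring_nf
  constructor
  · have h1 : ∫ η in (δ / 2)..δ, f η ≤ ∫ η in (0 : ℝ)..δ, f η := by
      refine intervalIntegral.integral_mono_interval (by linarith) (by linarith) le_rfl ?_ hfint
      rw [← restrict_Ioo_eq_restrict_Ioc]
      exact (ae_restrict_iff' measurableSet_Ioo).2 (Eventually.of_forall hnn)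
    have h2 : ∫ η in (δ / 2)..δ, A * (δ / 2) ^ k * (δ - η) ^ p ≤ ∫ η in (δ / 2)..δ, f η := by
      refine intervalIntegral.integral_mono_on_of_le_Ioo (by linarith) ((hkernel _ _).const_mul _)
        (hfint.mono_set (by
          rw [uIcc_of_le hδ.le, uIcc_of_le (by linarith)]
          exact Icc_subset_Icc (by linarith) le_rfl)) ?_
      intro η hη
      have h3 : 0 < δ - η := sub_pos.2 hη.2
      have h4 := hη.1.le
      refine le_trans ?_ (hlow η ⟨by linarith [hη.1], hη.2⟩)
      gcongr
    rw [intervalIntegral.integral_const_mul, hval, show δ - δ / 2 = δ / 2 by ring] at h2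
    refine le_trans (le_of_eq ?_) (h2.trans h1)
    have h5 : (δ / 2) ^ k * (δ / 2) ^ (p + 1) = (1 / 2) ^ (k + p + 1) * δ ^ (k + p + 1) := by
      rw [← Real.rpow_add (by positivity), ← Real.mul_rpow (by norm_num) hδ.le]
      ring_nf
    calc _ = A * ((1 / 2) ^ (k + p + 1) * δ ^ (k + p + 1)) / (p + 1) := by ring
      _ = _ := by rw [← h5]; ring
  · have h2 : ∫ η in (0 : ℝ)..δ, f η ≤ ∫ η in (0 : ℝ)..δ, B * δ ^ k * (δ - η) ^ p :=
      intervalIntegral.integral_mono_on_of_le_Ioo hδ.le hfint ((hkernel _ _).const_mul _) hup'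
    rw [intervalIntegral.integral_const_mul, hval, sub_zero] at h2
    refine h2.trans (le_of_eq ?_)
    rw [← hδk]; ring

theorem nonneg_of_rpow_le_of_bounded {Φ : ℝ → ℝ} {k c η₀ M : ℝ} (hc : 0 < c) (hη₀ : 0 < η₀)
    (h : ∀ η ∈ Ioo 0 η₀, c * η ^ k ≤ Φ η) (hM : ∀ η ∈ Icc (0 : ℝ) 1, Φ η ≤ M) : 0 ≤ k := by
  by_contra! hk
  have h1 := tendsto_rpow_neg_nhdsGT_zero hk
  have h2 : ∀ᶠ η in 𝓝[>] (0 : ℝ), η ∈ Ioo 0 (min η₀ 1) :=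
    Ioo_mem_nhdsGT (lt_min hη₀ one_pos)
  obtain ⟨η, h3, h4⟩ := ((h1.eventually_gt_atTop (M / c)).and h2).exists
  have h5 := h η ⟨h4.1, h4.2.trans_le (min_le_left _ _)⟩
  have h6 := hM η ⟨h4.1.le, (h4.2.trans_le (min_le_right _ _)).le⟩
  rw [div_lt_iff₀ hc] at h3
  linarith

theorem exists_hasDerivAt_comp_inverse {P g h g' h' : ℝ → ℝ} {Y : ℝ}
    (hg0 : g 0 = 0) (hgc : ContinuousOn g (Icc 0 Y))
    (hg : ∀ y ∈ Ioo 0 Y, HasDerivAt g (g' y) y) (hg' : ∀ y ∈ Ioo 0 Y, 0 < g' y)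
    (hh : ∀ y ∈ Ioo 0 Y, HasDerivAt h (h' y) y)
    (hP : ∀ y ∈ Ioo 0 Y, P (g y) = h y) (hY : 0 ≤ Y) :
    ∀ ρ ∈ Ioo 0 (g Y), ∃ y ∈ Ioo 0 Y, g y = ρ ∧ HasDerivAt P (h' y / g' y) ρ := by
  have hmono : StrictMonoOn g (Icc 0 Y) := by
    refine strictMonoOn_of_deriv_pos (convex_Icc 0 Y) hgc fun y hy => ?_
    rw [interior_Icc] at hy
    rw [(hg y hy).deriv]
    exact hg' y hy
  have hsurj : ∀ ρ ∈ Ioo 0 (g Y), ∃ y ∈ Ioo 0 Y, g y = ρ := by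
    have := intermediate_value_Ioo hY hgc
    rwa [hg0] at this
  choose! ψ hψ hgψ using hsurj
  intro ρ hρ
  have hnhds : Ioo 0 (g Y) ∈ 𝓝 ρ := Ioo_mem_nhds hρ.1 hρ.2
  have hψmono : StrictMonoOn ψ (Ioo 0 (g Y)) := fun a ha b hb hab => by
    rw [← hmono.lt_iff_lt (Ioo_subset_Icc_self (hψ a ha)) (Ioo_subset_Icc_self (hψ b hb)),
      hgψ a ha, hgψ b hb]
    exact hab
  have himage : ψ '' Ioo 0 (g Y) = Ioo 0 Y := by
    refine Subset.antisymm (image_subset_iff.2 hψ) fun y hy => ?_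
    have hgy : g y ∈ Ioo 0 (g Y) := by
      rw [← hg0]
      exact ⟨hmono ⟨le_rfl, hY⟩ (Ioo_subset_Icc_self hy) hy.1,
        hmono (Ioo_subset_Icc_self hy) ⟨hY, le_rfl⟩ hy.2⟩
    exact ⟨g y, hgy, hmono.injOn (Ioo_subset_Icc_self (hψ _ hgy)) (Ioo_subset_Icc_self hy)
      (hgψ _ hgy)⟩
  have hψc : ContinuousAt ψ ρ := hψmono.continuousAt_of_image_mem_nhds hnhds (by
    rw [himage]
    exact Ioo_mem_nhds (hψ ρ hρ).1 (hψ ρ hρ).2)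
  have hψd : HasDerivAt ψ (g' (ψ ρ))⁻¹ ρ :=
    (hg _ (hψ ρ hρ)).of_local_left_inverse hψc (hg' _ (hψ ρ hρ)).ne'
      (by filter_upwards [hnhds] with r hr using hgψ r hr)
  refine ⟨ψ ρ, hψ ρ hρ, hgψ ρ hρ, ?_⟩
  rw [div_eq_mul_inv]
  refine ((hh _ (hψ ρ hρ)).comp ρ hψd).congr_of_eventuallyEq ?_
  filter_upwards [hnhds] with r hr
  rw [Function.comp_apply, ← hP _ (hψ r hr), hgψ r hr]

theorem integral_zero_one_eq_of_eq_zero {f : ℝ → ℝ} {b : ℝ} (hb0 : 0 ≤ b) (hb1 : b ≤ 1)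
    (hf : ∀ η, b < η → η ≤ 1 → f η = 0) :
    ∫ η in (0 : ℝ)..1, f η = ∫ η in (0 : ℝ)..b, f η := by
  rw [intervalIntegral.integral_of_le zero_le_one, intervalIntegral.integral_of_le hb0]
  refine setIntegral_eq_of_subset_of_forall_sdiff_eq_zero measurableSet_Ioc
    (Ioc_subset_Ioc_right hb1) fun η hη => ?_
  refine hf η ?_ hη.1.2
  by_contra! h
  exact hη.2 ⟨hη.1.1, h⟩

theorem sqrt_sq_sub_eq_zero {a η : ℝ} (h1 : 1 - a < η) (h2 : η ≤ 1) :
    √((1 - η) ^ 2 - a ^ 2) = 0 :=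
  Real.sqrt_eq_zero_of_nonpos (by nlinarith)

theorem sqrt_sq_sub_bounds {a η : ℝ} (ha : 1 / 2 ≤ a) (h1 : 0 < η) (h2 : η < 1 - a) :
    (1 - a - η) ^ (1 / 2 : ℝ) ≤ √((1 - η) ^ 2 - a ^ 2) ∧
      √((1 - η) ^ 2 - a ^ 2) ≤ 2 * (1 - a - η) ^ (1 / 2 : ℝ) := by
  rw [← Real.sqrt_eq_rpow]
  refine ⟨Real.sqrt_le_sqrt (by nlinarith), ?_⟩
  refine (Real.sqrt_le_sqrt (y := 2 ^ 2 * (1 - a - η)) (by nlinarith)).trans (le_of_eq ?_)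
  rw [Real.sqrt_mul (by norm_num), Real.sqrt_sq (by norm_num)]

theorem isTheta_one_of_tendsto {f : ℝ → ℝ} {l : Filter ℝ} {c : ℝ} (hc : c ≠ 0)
    (h : Tendsto f l (𝓝 c)) : f =Θ[l] fun _ => (1 : ℝ) :=
  ((isEquivalent_const_iff_tendsto hc).2 h).isTheta.trans
    (isTheta_const_const hc one_ne_zero)

theorem isTheta_of_le_of_le {f g : ℝ → ℝ} {l : Filter ℝ} {A B : ℝ} (hA : 0 < A)
    (h0 : ∀ᶠ y in l, 0 ≤ g y) (h1 : ∀ᶠ y in l, A * g y ≤ f y) (h2 : ∀ᶠ y in l, f y ≤ B * g y) :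
    f =Θ[l] g := by
  constructor
  · refine IsBigO.of_bound B ?_
    filter_upwards [h0, h1, h2] with y h0 h1 h2
    rw [Real.norm_of_nonneg h0, Real.norm_of_nonneg ((mul_nonneg hA.le h0).trans h1)]
    exact h2
  · refine IsBigO.of_bound A⁻¹ ?_
    filter_upwards [h0, h1] with y h0 h1
    rw [Real.norm_of_nonneg h0, Real.norm_of_nonneg ((mul_nonneg hA.le h0).trans h1),
      inv_mul_eq_div, le_div_iff₀ hA, mul_comm]
    exact h1

theorem tendsto_one_sub_exp_neg :
    Tendsto (fun y : ℝ => 1 - Real.exp (-y)) (𝓝[>] 0) (𝓝 0) := by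
  have : ContinuousAt (fun y : ℝ => 1 - Real.exp (-y)) 0 := by fun_prop
  simpa using this.tendsto.mono_left nhdsWithin_le_nhds

/-- An integral over `[0, 1]` with kernel comparable to `η ^ k (1 - e⁻ʸ - η) ^ p` on
`(0, 1 - e⁻ʸ)` and vanishing beyond is positive and comparable to a power of `1 - e⁻ʸ`. -/
theorem isTheta_integral_of_rpow_bounds {f : ℝ → ℝ → ℝ} {k p A B ε : ℝ} (hk : 0 ≤ k)
    (hp : -1 < p) (hA : 0 < A) (hB : 0 ≤ B) (hε : 0 < ε) (hf : ∀ a, Measurable (f a))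
    (hzero : ∀ a η, 1 - a < η → η ≤ 1 → f a η = 0)
    (hbd : ∀ a η, 1 / 2 ≤ a → 0 < η → η < 1 - a → η < ε →
      A * η ^ k * (1 - a - η) ^ p ≤ f a η ∧ f a η ≤ B * η ^ k * (1 - a - η) ^ p) :
    (∀ᶠ y in 𝓝[>] (0 : ℝ), 0 < ∫ η in (0 : ℝ)..1, f (Real.exp (-y)) η) ∧
    (fun y => ∫ η in (0 : ℝ)..1, f (Real.exp (-y)) η) =Θ[𝓝[>] 0]
      fun y => (1 - Real.exp (-y)) ^ (k + p + 1) := by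
  have hp1 : 0 < p + 1 := by linarith
  have hpos : ∀ᶠ y in 𝓝[>] (0 : ℝ), 0 < 1 - Real.exp (-y) := by
    filter_upwards [self_mem_nhdsWithin] with y (hy : 0 < y)
    have : Real.exp (-y) < 1 := Real.exp_lt_one_iff.2 (by linarith)
    linarith
  have hC : 0 < A * (1 / 2) ^ (k + p + 1) / (p + 1) := by positivity
  have key : ∀ᶠ y in 𝓝[>] (0 : ℝ),
      A * (1 / 2) ^ (k + p + 1) / (p + 1) * (1 - Real.exp (-y)) ^ (k + p + 1)
        ≤ ∫ η in (0 : ℝ)..1, f (Real.exp (-y)) η ∧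
      ∫ η in (0 : ℝ)..1, f (Real.exp (-y)) η
        ≤ B / (p + 1) * (1 - Real.exp (-y)) ^ (k + p + 1) := by
    filter_upwards [hpos, tendsto_one_sub_exp_neg.eventually_lt_const
      (lt_min hε (by norm_num : (0 : ℝ) < 1 / 2))] with y hy hlt
    have hlt1 := hlt.trans_le (min_le_left _ _)
    have hlt2 := hlt.trans_le (min_le_right _ _)
    rw [integral_zero_one_eq_of_eq_zero hy.le (by linarith) (hzero _)]
    exact integral_bounds_of_rpow_bounds hk hp hA.le hB hy (hf _)
      (fun η hη => (hbd _ η (by linarith) hη.1 hη.2 (hη.2.trans hlt1)).1)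
      (fun η hη => (hbd _ η (by linarith) hη.1 hη.2 (hη.2.trans hlt1)).2)
  refine ⟨?_, isTheta_of_le_of_le hC ?_ (key.mono fun _ h => h.1) (key.mono fun _ h => h.2)⟩
  · filter_upwards [hpos, key] with y hy h
    exact lt_of_lt_of_le (by positivity) h.1
  · filter_upwards [hpos] with y hy
    positivity

theorem exists_deriv_bounds_of_isTheta {P g h g' h' δ : ℝ → ℝ} {q : ℝ} (hq : 0 < q)
    (hg0 : g 0 = 0) (hP : ∀ y, 0 ≤ y → P (g y) = h y)
    (hg : ∀ y, 0 < y → HasDerivAt g (g' y) y) (hh : ∀ y, 0 < y → HasDerivAt h (h' y) y)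
    (hδ0 : Tendsto δ (𝓝[>] 0) (𝓝 0)) (hδpos : ∀ᶠ y in 𝓝[>] 0, 0 < δ y)
    (hgpos : ∀ᶠ y in 𝓝[>] 0, 0 < g y) (hhpos : ∀ᶠ y in 𝓝[>] 0, 0 < h y)
    (hg'pos : ∀ᶠ y in 𝓝[>] 0, 0 < g' y) (hh'pos : ∀ᶠ y in 𝓝[>] 0, 0 < h' y)
    (hgΘ : g =Θ[𝓝[>] 0] fun y => δ y ^ q) (hhΘ : h =Θ[𝓝[>] 0] fun y => δ y ^ (q + 1))
    (hg'Θ : g' =Θ[𝓝[>] 0] fun y => δ y ^ (q - 1)) (hh'Θ : h' =Θ[𝓝[>] 0] fun y => δ y ^ q) :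
    ∃ d₁ d₂ : ℝ, 0 < d₁ ∧ 0 < d₂ ∧ ∃ ρ₀ : ℝ, 0 < ρ₀ ∧ ∀ ρ ∈ Ioo (0 : ℝ) ρ₀,
      d₁ * ρ ^ (1 / q) ≤ deriv P ρ ∧ deriv P ρ ≤ d₂ * ρ ^ (1 / q) ∧
      d₁ * ρ ^ (1 / q + 1) ≤ P ρ ∧ P ρ ≤ d₂ * ρ ^ (1 / q + 1) := by
  have hgnn : 0 ≤ᶠ[𝓝[>] 0] g := hgpos.mono fun _ h => h.le
  have hδqnn : 0 ≤ᶠ[𝓝[>] 0] fun y => δ y ^ q := hδpos.mono fun _ h => Real.rpow_nonneg h.le _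
  have hPΘ : h =Θ[𝓝[>] 0] fun y => g y ^ (1 / q + 1) := by
    refine hhΘ.trans (EventuallyEq.trans_isTheta ?_ (hgΘ.rpow (r := 1 / q + 1) hgnn hδqnn).symm)
    filter_upwards [hδpos] with y hy
    rw [← Real.rpow_mul hy.le]
    congr 1
    field_simp
    ring
  have hP'Θ : (fun y => h' y / g' y) =Θ[𝓝[>] 0] fun y => g y ^ (1 / q) := by
    refine (hh'Θ.div hg'Θ).trans
      (EventuallyEq.trans_isTheta ?_ (hgΘ.rpow (r := 1 / q) hgnn hδqnn).symm)
    filter_upwards [hδpos] with y hy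
    rw [← Real.rpow_mul hy.le, ← Real.rpow_sub hy]
    congr 1
    field_simp
    ring
  have hgt : Tendsto g (𝓝[>] 0) (𝓝 0) := by
    rw [hgΘ.tendsto_zero_iff]
    simpa [Real.zero_rpow hq.ne'] using hδ0.rpow_const (Or.inr hq.le)
  obtain ⟨b₁, hb₁, hb₁'⟩ := hPΘ.1.exists_pos
  obtain ⟨b₂, hb₂, hb₂'⟩ := hPΘ.2.exists_pos
  obtain ⟨b₃, hb₃, hb₃'⟩ := hP'Θ.1.exists_pos
  obtain ⟨b₄, hb₄, hb₄'⟩ := hP'Θ.2.exists_pos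
  have hev := hgpos.and (hhpos.and (hg'pos.and (hh'pos.and
    (hb₁'.bound.and (hb₂'.bound.and (hb₃'.bound.and hb₄'.bound))))))
  obtain ⟨Z, hZ, hZ'⟩ := mem_nhdsGT_iff_exists_Ioo_subset.1 hev
  have hZ0 : (0 : ℝ) < Z := hZ
  have hYZ : Z / 2 < Z := by linarith
  have hY0 : 0 < Z / 2 := by linarith
  set Y := Z / 2
  have hgc : ContinuousOn g (Icc 0 Y) := by
    intro y hy
    rcases hy.1.eq_or_lt with rfl | hy0
    · have : ContinuousWithinAt g (Ioi 0) 0 := by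
        unfold ContinuousWithinAt
        rwa [hg0]
      exact (continuousWithinAt_Ioi_iff_Ici.1 this).mono Icc_subset_Ici_self
    · exact (hg y hy0).continuousAt.continuousWithinAt
  have hin : ∀ y ∈ Ioo 0 Y, y ∈ Ioo 0 Z := fun y hy => ⟨hy.1, hy.2.trans hYZ⟩
  have hinv := exists_hasDerivAt_comp_inverse hg0 hgc (fun y hy => hg y hy.1)
    (fun y hy => (hZ' (hin y hy)).2.2.1) (fun y hy => hh y hy.1) (fun y hy => hP y hy.1.le) hY0.le
  refine ⟨min b₄⁻¹ b₂⁻¹, max b₃ b₁, by positivity, by positivity, g Y,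
    (hZ' (⟨hY0, hYZ⟩ : Y ∈ Ioo 0 Z)).1, fun ρ hρ => ?_⟩
  obtain ⟨y, hy, rfl, hd⟩ := hinv ρ hρ
  obtain ⟨e1, e2, e3, e4, e5, e6, e7, e8⟩ := hZ' (hin y hy)
  rw [hd.deriv, hP y hy.1.le]
  have hr1 : 0 < g y ^ (1 / q) := by positivity
  have hr2 : 0 < g y ^ (1 / q + 1) := by positivity
  have hr3 : 0 < h' y / g' y := by positivity
  rw [Real.norm_of_nonneg e2.le, Real.norm_of_nonneg hr2.le] at e5 e6
  rw [Real.norm_of_nonneg hr3.le, Real.norm_of_nonneg hr1.le] at e7 e8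
  refine ⟨?_, ?_, ?_, ?_⟩
  · calc _ ≤ b₄⁻¹ * g y ^ (1 / q) := by gcongr; exact min_le_left _ _
      _ ≤ _ := by rwa [inv_mul_le_iff₀ hb₄]
  · exact e7.trans (by gcongr; exact le_max_left _ _)
  · calc _ ≤ b₂⁻¹ * g y ^ (1 / q + 1) := by gcongr; exact min_le_right _ _
      _ ≤ _ := by rwa [inv_mul_le_iff₀ hb₂]
  · exact e5.trans (by gcongr; exact le_max_right _ _)

theorem exp_neg_two_mul (y : ℝ) : Real.exp (-2 * y) = Real.exp (-y) ^ 2 := by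
  rw [← Real.exp_nat_mul]; ring_nf

theorem gfun_eq_of_pos (Φ : ℝ → ℝ) {y : ℝ} (hy : 0 < y) :
    gfun Φ y = 4 * Real.pi * (Real.exp (4 * y) *
      ∫ η in (0 : ℝ)..1, Φ η * (1 - η) ^ 2 * √((1 - η) ^ 2 - Real.exp (-y) ^ 2)) := by
  have h1 : Real.exp (-y) < 1 := Real.exp_lt_one_iff.2 (by linarith)
  have h2 := Real.exp_pos (-y)
  rw [gfun, if_neg hy.not_ge, exp_neg_two_mul,
    integral_zero_one_eq_of_eq_zero (b := 1 - Real.exp (-y)) (by linarith) (by linarith), mul_assoc]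
  intro η h3 h4
  rw [sqrt_sq_sub_eq_zero h3 h4, mul_zero]

theorem hfun_eq_of_pos (Φ : ℝ → ℝ) {y : ℝ} (hy : 0 < y) :
    hfun Φ y = 4 * Real.pi / 3 * (Real.exp (4 * y) *
      ∫ η in (0 : ℝ)..1, Φ η * √((1 - η) ^ 2 - Real.exp (-y) ^ 2) ^ 3) := by
  have h1 : Real.exp (-y) < 1 := Real.exp_lt_one_iff.2 (by linarith)
  have h2 := Real.exp_pos (-y)
  rw [hfun, if_neg hy.not_ge, exp_neg_two_mul,
    integral_zero_one_eq_of_eq_zero (b := 1 - Real.exp (-y)) (by linarith) (by linarith), mul_assoc]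
  intro η h3 h4
  rw [sqrt_sq_sub_eq_zero h3 h4]
  ring

theorem hasDerivAt_exp_four_mul_comp {F : ℝ → ℝ} {F' y : ℝ}
    (hF : HasDerivAt F F' (Real.exp (-y) ^ 2)) :
    HasDerivAt (fun y => Real.exp (4 * y) * F (Real.exp (-y) ^ 2))
      (Real.exp (4 * y) * (4 * F (Real.exp (-y) ^ 2) + 2 * Real.exp (-y) ^ 2 * -F')) y := by
  have h1 : HasDerivAt (fun y : ℝ => Real.exp (4 * y)) (Real.exp (4 * y) * 4) y := by
    simpa using ((hasDerivAt_id y).const_mul 4).exp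
  have h2 : HasDerivAt (fun y : ℝ => Real.exp (-y) ^ 2) (-2 * Real.exp (-y) ^ 2) y := by
    have h3 : HasDerivAt (fun y : ℝ => Real.exp (-y)) (-Real.exp (-y)) y := by
      simpa using (hasDerivAt_neg y).exp
    exact (h3.pow 2).congr_deriv (by push_cast; ring)
  have h4 : HasDerivAt (fun y : ℝ => F (Real.exp (-y) ^ 2)) (F' * (-2 * Real.exp (-y) ^ 2)) y :=
    HasDerivAt.comp y hF h2
  exact (h1.mul h4).congr_deriv (by ring)

theorem hasDerivAt_gfun {Φ : ℝ → ℝ} {M y : ℝ} (hΦ : Measurable Φ)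
    (hM : ∀ η ∈ Icc (0 : ℝ) 1, |Φ η| ≤ M) (hy : 0 < y) :
    HasDerivAt (gfun Φ) (4 * Real.pi * (Real.exp (4 * y) *
      (4 * (∫ η in (0 : ℝ)..1, Φ η * (1 - η) ^ 2 * √((1 - η) ^ 2 - Real.exp (-y) ^ 2)) +
        2 * Real.exp (-y) ^ 2 * ∫ η in (0 : ℝ)..1,
          Φ η * (1 - η) ^ 2 / (2 * √((1 - η) ^ 2 - Real.exp (-y) ^ 2))))) y := by
  have h1 := hasDerivAt_integral_mul_sqrt (ψ := fun η => Φ η * (1 - η) ^ 2) (M := M)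
    (by fun_prop) (fun η hη => by
      rw [abs_mul]
      have h2 : |(1 - η) ^ 2| ≤ 1 := by
        rw [abs_of_nonneg (sq_nonneg _)]; nlinarith [hη.1, hη.2]
      calc _ ≤ |Φ η| * 1 := by gcongr
        _ ≤ M := by rw [mul_one]; exact hM η hη) (Real.exp_pos (-y))
  rw [intervalIntegral.integral_neg] at h1
  have h3 := (hasDerivAt_exp_four_mul_comp h1).const_mul (4 * Real.pi)
  rw [neg_neg] at h3
  refine h3.congr_of_eventuallyEq ?_
  filter_upwards [Ioi_mem_nhds hy] with z hz using gfun_eq_of_pos Φ hz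

theorem hasDerivAt_hfun {Φ : ℝ → ℝ} {M y : ℝ} (hΦ : Measurable Φ)
    (hM : ∀ η ∈ Icc (0 : ℝ) 1, |Φ η| ≤ M) (hy : 0 < y) :
    HasDerivAt (hfun Φ) (4 * Real.pi / 3 * (Real.exp (4 * y) *
      (4 * (∫ η in (0 : ℝ)..1, Φ η * √((1 - η) ^ 2 - Real.exp (-y) ^ 2) ^ 3) +
        2 * Real.exp (-y) ^ 2 * (3 / 2 * ∫ η in (0 : ℝ)..1,
          Φ η * √((1 - η) ^ 2 - Real.exp (-y) ^ 2))))) y := by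
  have h1 := hasDerivAt_integral_mul_sqrt_pow_three hΦ hM (Real.exp (-y) ^ 2)
  rw [intervalIntegral.integral_neg, intervalIntegral.integral_const_mul] at h1
  have h3 := (hasDerivAt_exp_four_mul_comp h1).const_mul (4 * Real.pi / 3)
  rw [neg_neg] at h3
  refine h3.congr_of_eventuallyEq ?_
  filter_upwards [Ioi_mem_nhds hy] with z hz using hfun_eq_of_pos Φ hz

theorem isTheta_const_mul_exp_mul {F G : ℝ → ℝ} {c : ℝ} (hc : c ≠ 0) (hF : F =Θ[𝓝[>] 0] G) :
    (fun y => c * (Real.exp (4 * y) * F y)) =Θ[𝓝[>] 0] G := by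
  rw [isTheta_const_mul_left hc]
  have h1 : Tendsto (fun y : ℝ => Real.exp (4 * y)) (𝓝[>] 0) (𝓝 1) := by
    have : ContinuousAt (fun y : ℝ => Real.exp (4 * y)) 0 := by fun_prop
    simpa using this.tendsto.mono_left nhdsWithin_le_nhds
  simpa using (isTheta_one_of_tendsto one_ne_zero h1).mul hF

theorem isTheta_four_mul_add {F D : ℝ → ℝ} {r s c : ℝ} (hc : c ≠ 0) (hrs : r < s)
    (hF : F =Θ[𝓝[>] 0] fun y => (1 - Real.exp (-y)) ^ s)
    (hD : D =Θ[𝓝[>] 0] fun y => (1 - Real.exp (-y)) ^ r) :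
    (fun y => 4 * F y + 2 * Real.exp (-y) ^ 2 * (c * D y)) =Θ[𝓝[>] 0]
      fun y => (1 - Real.exp (-y)) ^ r := by
  have h1 : Tendsto (fun y : ℝ => 2 * Real.exp (-y) ^ 2 * c) (𝓝[>] 0) (𝓝 (2 * c)) := by
    have : ContinuousAt (fun y : ℝ => 2 * Real.exp (-y) ^ 2 * c) 0 := by fun_prop
    simpa using this.tendsto.mono_left nhdsWithin_le_nhds
  have h2 := (isTheta_one_of_tendsto (by positivity) h1).mul hD
  simp only [one_mul] at h2
  have h3 : (fun y : ℝ => (1 - Real.exp (-y)) ^ s) =o[𝓝[>] 0]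
      fun y => (1 - Real.exp (-y)) ^ r := by
    have h4 : Tendsto (fun y : ℝ => (1 - Real.exp (-y)) ^ (s - r)) (𝓝[>] 0) (𝓝 0) := by
      simpa [Real.zero_rpow (sub_pos.2 hrs).ne'] using
        tendsto_one_sub_exp_neg.rpow_const (Or.inr (sub_pos.2 hrs).le)
    have h5 := ((isLittleO_one_iff ℝ).2 h4).mul_isBigO
      (isBigO_refl (fun y : ℝ => (1 - Real.exp (-y)) ^ r) (𝓝[>] 0))
    simp only [one_mul] at h5
    refine h5.congr' ?_ EventuallyEq.rfl
    filter_upwards [self_mem_nhdsWithin] with y (hy : 0 < y)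
    have : Real.exp (-y) < 1 := Real.exp_lt_one_iff.2 (by linarith)
    rw [← Real.rpow_add (by linarith), sub_add_cancel]
  have h6 := h2.add_isLittleO ((hF.1.const_mul_left 4).trans_isLittleO h3)
  refine EventuallyEq.trans_isTheta (Eventually.of_forall fun y => ?_) h6
  simp only [Pi.add_apply]
  ring

end Auxiliary

/-- Under (Φ1) with exponent `k ∈ (−1/2, 3/2)` and with
`γ := 1/(k + 3/2) ∈ (1/3, 1)`, the induced equation of state `P = h ∘ g⁻¹` satisfies
`d₁ ρ^γ ≤ P′(ρ) ≤ d₂ ρ^γ` and `d₁ ρ^{γ+1} ≤ P(ρ) ≤ d₂ ρ^{γ+1}` for small `ρ > 0`; in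
particular `P′(ρ) ≤ c ρ^{1/n}` with `n = k + 3/2 ∈ (1, 3)`. -/
theorem stmt13 (Φ : ℝ → ℝ) (k c₁ c₂ η₀ : ℝ)
    (hk : k ∈ Set.Ioo (-(1/2) : ℝ) (3/2))
    (hc₁ : 0 < c₁) (hc₂ : 0 < c₂) (hη₀ : 0 < η₀)
    (hΦmeas : Measurable Φ)
    (hΦnonneg : ∀ η : ℝ, 0 ≤ Φ η)
    (hΦzero : ∀ η : ℝ, η ≤ 0 → Φ η = 0)
    (hΦloc : ∀ a : ℝ, 0 < a → ∃ M : ℝ, ∀ η ∈ Set.Icc (0:ℝ) a, Φ η ≤ M)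
    (hΦasymp : ∀ η ∈ Set.Ioo (0:ℝ) η₀, c₁ * η ^ k ≤ Φ η ∧ Φ η ≤ c₂ * η ^ k)
    (P : ℝ → ℝ)
    (hP : ∀ y : ℝ, 0 ≤ y → P (gfun Φ y) = hfun Φ y) :
    (1 / (k + 3/2) ∈ Set.Ioo (1/3 : ℝ) 1) ∧
    (k + 3/2 ∈ Set.Ioo (1 : ℝ) 3) ∧
    ∃ d₁ d₂ : ℝ, 0 < d₁ ∧ 0 < d₂ ∧ ∃ ρ₀ : ℝ, 0 < ρ₀ ∧
      ∀ ρ ∈ Set.Ioo (0:ℝ) ρ₀,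
        d₁ * ρ ^ (1 / (k + 3/2)) ≤ deriv P ρ ∧
        deriv P ρ ≤ d₂ * ρ ^ (1 / (k + 3/2)) ∧
        d₁ * ρ ^ (1 / (k + 3/2) + 1) ≤ P ρ ∧
        P ρ ≤ d₂ * ρ ^ (1 / (k + 3/2) + 1) := by
  obtain ⟨hk1, hk2⟩ := hk
  have hq : 0 < k + 3 / 2 := by linarith
  refine ⟨⟨one_div_lt_one_div_of_lt hq (by linarith), ?_⟩, ⟨by linarith, by linarith⟩, ?_⟩
  · rw [div_lt_one hq]; linarith
  obtain ⟨M, hM⟩ := hΦloc 1 one_pos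
  have hk0 : 0 ≤ k := nonneg_of_rpow_le_of_bounded hc₁ hη₀ (fun η hη => (hΦasymp η hη).1) hM
  have hM' : ∀ η ∈ Set.Icc (0 : ℝ) 1, |Φ η| ≤ M := fun η hη => by
    rw [abs_of_nonneg (hΦnonneg η)]; exact hM η hη
  have hpow : ∀ x : ℝ, 0 < x → x ^ (-(1 / 2) : ℝ) = (x ^ (1 / 2 : ℝ))⁻¹ ∧
      x ^ (3 / 2 : ℝ) = (x ^ (1 / 2 : ℝ)) ^ 3 := fun x hx =>
    ⟨Real.rpow_neg hx.le _, by rw [← Real.rpow_mul_natCast hx.le]; norm_num⟩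
  have hw : ∀ a η : ℝ, 1 / 2 ≤ a → 0 < η → η < 1 - a → 1 / 4 ≤ (1 - η) ^ 2 ∧ (1 - η) ^ 2 ≤ 1 :=
    fun a η h1 h2 h3 => ⟨by nlinarith, by nlinarith⟩
  obtain ⟨hSpos, hSΘ⟩ := isTheta_integral_of_rpow_bounds (p := 1 / 2) (A := c₁ / 4) (B := 2 * c₂)
    (f := fun a η => Φ η * (1 - η) ^ 2 * √((1 - η) ^ 2 - a ^ 2)) hk0 (by norm_num)
    (by positivity) (by positivity) hη₀ (fun a => by fun_prop)
    (fun a η h1 h2 => by simp only [sqrt_sq_sub_eq_zero h1 h2, mul_zero])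
    (fun a η h1 h2 h3 h4 => by
      obtain ⟨e1, e2⟩ := hΦasymp η ⟨h2, h4⟩
      obtain ⟨e3, e4⟩ := sqrt_sq_sub_bounds h1 h2 h3
      obtain ⟨e5, e6⟩ := hw a η h1 h2 h3
      have e7 := hΦnonneg η
      have e8 : 0 < (1 - a - η) ^ (1 / 2 : ℝ) := Real.rpow_pos_of_pos (by linarith) _
      constructor
      · calc _ = c₁ * η ^ k * (1 / 4) * (1 - a - η) ^ (1 / 2 : ℝ) := by ring
          _ ≤ _ := by gcongr
      · calc _ ≤ c₂ * η ^ k * 1 * (2 * (1 - a - η) ^ (1 / 2 : ℝ)) := by gcongr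
          _ = _ := by ring)
  obtain ⟨hDpos, hDΘ⟩ := isTheta_integral_of_rpow_bounds (p := -(1 / 2)) (A := c₁ / 16)
    (B := c₂ / 2)
    (f := fun a η => Φ η * (1 - η) ^ 2 / (2 * √((1 - η) ^ 2 - a ^ 2))) hk0 (by norm_num)
    (by positivity) (by positivity) hη₀ (fun a => by fun_prop)
    (fun a η h1 h2 => by simp only [sqrt_sq_sub_eq_zero h1 h2, mul_zero, div_zero])
    (fun a η h1 h2 h3 h4 => by
      obtain ⟨e1, e2⟩ := hΦasymp η ⟨h2, h4⟩
      obtain ⟨e3, e4⟩ := sqrt_sq_sub_bounds h1 h2 h3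
      obtain ⟨e5, e6⟩ := hw a η h1 h2 h3
      have e7 := hΦnonneg η
      have e8 : 0 < (1 - a - η) ^ (1 / 2 : ℝ) := Real.rpow_pos_of_pos (by linarith) _
      rw [(hpow _ (by linarith)).1]
      constructor
      · calc _ = c₁ * η ^ k * (1 / 4) / (2 * (2 * (1 - a - η) ^ (1 / 2 : ℝ))) := by
              field_simp; norm_num
          _ ≤ _ := by gcongr; linarith
      · calc _ ≤ c₂ * η ^ k * 1 / (2 * (1 - a - η) ^ (1 / 2 : ℝ)) := by gcongr
          _ = _ := by field_simp)
  obtain ⟨hHpos, hHΘ⟩ := isTheta_integral_of_rpow_bounds (p := 3 / 2) (A := c₁) (B := 8 * c₂)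
    (f := fun a η => Φ η * √((1 - η) ^ 2 - a ^ 2) ^ 3) hk0 (by norm_num)
    hc₁ (by positivity) hη₀ (fun a => by fun_prop)
    (fun a η h1 h2 => by simp [sqrt_sq_sub_eq_zero h1 h2])
    (fun a η h1 h2 h3 h4 => by
      obtain ⟨e1, e2⟩ := hΦasymp η ⟨h2, h4⟩
      obtain ⟨e3, e4⟩ := sqrt_sq_sub_bounds h1 h2 h3
      have e7 := hΦnonneg η
      have e8 : 0 < (1 - a - η) ^ (1 / 2 : ℝ) := Real.rpow_pos_of_pos (by linarith) _
      rw [(hpow _ (by linarith)).2]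
      constructor
      · gcongr
      · calc _ ≤ c₂ * η ^ k * (2 * (1 - a - η) ^ (1 / 2 : ℝ)) ^ 3 := by gcongr
          _ = _ := by ring)
  obtain ⟨hTpos, hTΘ⟩ := isTheta_integral_of_rpow_bounds (p := 1 / 2) (A := c₁) (B := 2 * c₂)
    (f := fun a η => Φ η * √((1 - η) ^ 2 - a ^ 2)) hk0 (by norm_num)
    hc₁ (by positivity) hη₀ (fun a => by fun_prop)
    (fun a η h1 h2 => by simp only [sqrt_sq_sub_eq_zero h1 h2, mul_zero])
    (fun a η h1 h2 h3 h4 => by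
      obtain ⟨e1, e2⟩ := hΦasymp η ⟨h2, h4⟩
      obtain ⟨e3, e4⟩ := sqrt_sq_sub_bounds h1 h2 h3
      have e7 := hΦnonneg η
      have e8 : 0 < (1 - a - η) ^ (1 / 2 : ℝ) := Real.rpow_pos_of_pos (by linarith) _
      constructor
      · gcongr
      · calc _ ≤ c₂ * η ^ k * (2 * (1 - a - η) ^ (1 / 2 : ℝ)) := by gcongr
          _ = _ := by ring)
  rw [show k + 1 / 2 + 1 = k + 3 / 2 by ring] at hSΘ hTΘ
  rw [show k + -(1 / 2) + 1 = k + 3 / 2 - 1 by ring] at hDΘ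
  have hgΘ := isTheta_const_mul_exp_mul (c := 4 * Real.pi) (by positivity) hSΘ
  have hhΘ := isTheta_const_mul_exp_mul (c := 4 * Real.pi / 3) (by positivity) hHΘ
  have hg'Θ := isTheta_const_mul_exp_mul (c := 4 * Real.pi) (by positivity)
    (isTheta_four_mul_add one_ne_zero (by linarith) hSΘ hDΘ)
  simp only [one_mul] at hg'Θ
  have hh'Θ := isTheta_const_mul_exp_mul (c := 4 * Real.pi / 3) (by positivity)
    (isTheta_four_mul_add (c := 3 / 2) (by norm_num) (by linarith) hHΘ hTΘ)
  refine exists_deriv_bounds_of_isTheta hq (by simp [gfun]) hP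
    (fun y hy => hasDerivAt_gfun hΦmeas hM' hy) (fun y hy => hasDerivAt_hfun hΦmeas hM' hy)
    tendsto_one_sub_exp_neg ?_ ?_ ?_ ?_ ?_
    (Filter.EventuallyEq.trans_isTheta ?_ hgΘ) (Filter.EventuallyEq.trans_isTheta ?_ hhΘ) hg'Θ hh'Θ
  · filter_upwards [self_mem_nhdsWithin] with y (hy : 0 < y)
    have : Real.exp (-y) < 1 := Real.exp_lt_one_iff.2 (by linarith)
    linarith
  · filter_upwards [self_mem_nhdsWithin, hSpos] with y (hy : 0 < y) h1
    rw [gfun_eq_of_pos Φ hy]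
    positivity
  · filter_upwards [self_mem_nhdsWithin, hHpos] with y (hy : 0 < y) h1
    rw [hfun_eq_of_pos Φ hy]
    positivity
  · filter_upwards [hSpos, hDpos] with y h1 h2
    positivity
  · filter_upwards [hHpos, hTpos] with y h1 h2
    positivity
  · filter_upwards [self_mem_nhdsWithin] with y (hy : 0 < y) using gfun_eq_of_pos Φ hy
  · filter_upwards [self_mem_nhdsWithin] with y (hy : 0 < y) using hfun_eq_of_pos Φ hy

end
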